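/- Let K be a quartic number field with a real quadratic subfield L, and let η ∈ K be an algebraic integer of degree 4 over ℚ with N_{K/ℚ}(η) = 1 such that ε := η² lies in L and is a unit of the ring of integers of L. Fix a nonzero β ∈ K, and let M′ = β·ℤ[η] be the ℤ-module with basis {β, βη, βη², βη³}. Then there exists a ℤ-basis W = {w₁, w₂, w₃, w₄} of M′ such that, writing β·η^k = x₁(k)w₁ + x₂(k)w₂ + x₃(k)w₃ + x₄(k)w₄ with x_i(k) ∈ ℤ, the sequence x₁ is a linear divisibility sequence. -/

import Mathlib

open Polynomial

/-!
Over `ℚ` the minimal polynomial of `η` is `X ^ 4 - t X ^ 2 + N` with `t ∈ ℤ` and `N` the norm of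
`η`. If `N = q ^ 2`, this is the characteristic polynomial of Lehmer's sequence `u` with parameters
`R = t + 2 q` and `Q = q`, whose addition formula makes it a divisibility sequence. So `u` and
`k ↦ β η ^ k` solve the same recurrence, and the linear form on `β ℤ[η]` that takes the value `u i`
at `β η ^ i` for `i < 4` takes the value `u k` at `β η ^ k` for all `k`. As `u 1 = 1`, that form is
a coordinate with respect to some basis.
-/

section LinearRecurrence

variable {A M : Type*} [Semiring A] [AddCommMonoid M] [Module A M]

/-- The sequence `s` in a module satisfies the linear recurrence with coefficients `c`; this is
`LinearRecurrence.IsSolution` for sequences with values in a module instead of the ring. -/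
def SatisfiesRecurrence {d : ℕ} (c : Fin d → A) (s : ℕ → M) : Prop :=
  ∀ n, s (n + d) = ∑ i, c i • s (n + i)

namespace SatisfiesRecurrence

variable {d : ℕ} {c : Fin d → A} {s : ℕ → M}

theorem mem_span (hs : SatisfiesRecurrence c s) (k : ℕ) :
    s k ∈ Submodule.span A (Set.range fun i : Fin d => s i) := by
  induction k using Nat.strong_induction_on with
  | _ k ih =>
    obtain hk | hk := lt_or_ge k d
    · exact Submodule.subset_span ⟨⟨k, hk⟩, rfl⟩
    · obtain ⟨n, rfl⟩ := Nat.exists_eq_add_of_le' hk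
      rw [hs]
      exact sum_mem fun i _ => Submodule.smul_mem _ _ (ih _ (by lia))

theorem eq_of_eq_init {s' : ℕ → M} (hs : SatisfiesRecurrence c s)
    (hs' : SatisfiesRecurrence c s') (hinit : ∀ i : Fin d, s i = s' i) : s = s' := by
  funext k
  induction k using Nat.strong_induction_on with
  | _ k ih =>
    obtain hk | hk := lt_or_ge k d
    · exact hinit ⟨k, hk⟩
    · obtain ⟨n, rfl⟩ := Nat.exists_eq_add_of_le' hk
      rw [hs, hs']
      exact Finset.sum_congr rfl fun i _ => by rw [ih _ (by lia)]

theorem map {N : Type*} [AddCommMonoid N] [Module A N] (hs : SatisfiesRecurrence c s)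
    (f : M →ₗ[A] N) : SatisfiesRecurrence c fun k => f (s k) := fun n => by
  simp [hs n]

theorem codRestrict (hs : SatisfiesRecurrence c s) {p : Submodule A M} (hp : ∀ k, s k ∈ p) :
    SatisfiesRecurrence c fun k => (⟨s k, hp k⟩ : p) := fun n =>
  Subtype.ext (by simp [hs n])

end SatisfiesRecurrence

end LinearRecurrence

theorem satisfiesRecurrence_mul_pow {A B : Type*} [CommSemiring A] [Semiring B] [Algebra A B]
    {d : ℕ} {c : Fin d → A} {x : B} (hx : x ^ d = ∑ i, c i • x ^ (i : ℕ)) (y : B) :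
    SatisfiesRecurrence c fun k => y * x ^ k := fun n => by
  simp only [pow_add, hx, Finset.mul_sum, mul_smul_comm]

section BasisCoord

open Module

variable {A M : Type*} [CommRing A] [AddCommGroup M] [Module A M]

theorem span_range_coe_basis {ι R N : Type*} [Semiring R] [AddCommMonoid N] [Module R N]
    {p : Submodule R N} (b : Basis ι R p) :
    Submodule.span R (Set.range fun i => (b i : N)) = p := by
  have h := congrArg (Submodule.map p.subtype) b.span_eq
  rwa [Submodule.map_span, ← Set.range_comp, Submodule.map_subtype_top] at h

-- The transvection `x ↦ x + (f x - b.coord j x) • b j` carries the form `b.coord j` to `f`.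
theorem exists_basis_coord_eq_linearForm {ι : Type*} (b : Basis ι A M) (f : M →ₗ[A] A) {j : ι}
    (hj : f (b j) = 1) (i : ι) : ∃ b' : Basis ι A M, b'.coord i = f := by
  classical
  have hker : (f - b.coord j) (b j) = 0 := by simp [hj]
  refine ⟨(b.map (LinearEquiv.transvection hker).symm).reindex (Equiv.swap i j), ?_⟩
  ext x
  simp [LinearMap.transvection.apply]

theorem SatisfiesRecurrence.exists_basis_coord_eq {d : ℕ} {c : Fin d → A} {s : ℕ → M}
    {u : ℕ → A} (hs : SatisfiesRecurrence c s) (hu : SatisfiesRecurrence c u)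
    (hli : LinearIndependent A fun i : Fin d => s i) {j : Fin d} (hj : u j = 1) (i : Fin d) :
    ∃ b : Basis (Fin d) A (Submodule.span A (Set.range fun i : Fin d => s i)),
      ∀ k, b.coord i ⟨s k, hs.mem_span k⟩ = u k := by
  set b := Basis.span hli
  have hb (l : Fin d) : b l = ⟨s l, hs.mem_span l⟩ := Basis.span_apply hli l
  set f := b.constr A fun l : Fin d => u l
  have hf : (fun k => f ⟨s k, hs.mem_span k⟩) = u :=
    ((hs.codRestrict hs.mem_span).map f).eq_of_eq_init hu fun l => by
      rw [← hb, Basis.constr_basis]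
  obtain ⟨b', hb'⟩ := exists_basis_coord_eq_linearForm b f (by rw [Basis.constr_basis, hj]) i
  exact ⟨b', fun k => hb' ▸ congrFun hf k⟩

end BasisCoord

section Lehmer

variable {A : Type*} [CommRing A] (R Q : A)

/-- Lehmer's sequence with parameters `R` and `Q`. If `a` and `b` are the roots of
`X ^ 2 - √R X + Q`, its `n`-th term is `(a ^ n - b ^ n) / (a - b)` for odd `n` and
`(a ^ n - b ^ n) / (a ^ 2 - b ^ 2)` for even `n`; the recurrence used here to define it
involves no square root. -/
def lehmerSeq : ℕ → A
  | 0 => 0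
  | 1 => 1
  | n + 2 => (if Even n then 1 else R) * lehmerSeq (n + 1) - Q * lehmerSeq n

theorem lehmerSeq_add_two (n : ℕ) :
    lehmerSeq R Q (n + 2) =
      (if Even n then 1 else R) * lehmerSeq R Q (n + 1) - Q * lehmerSeq R Q n := rfl

theorem lehmerSeq_add_four (n : ℕ) :
    lehmerSeq R Q (n + 4) =
      (R - 2 * Q) * lehmerSeq R Q (n + 2) - Q ^ 2 * lehmerSeq R Q n := by
  rw [lehmerSeq_add_two R Q (n + 2), lehmerSeq_add_two R Q (n + 1), lehmerSeq_add_two R Q n]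
  by_cases hn : Even n <;>
    simp only [hn, Nat.even_add_one, not_true, not_false_eq_true, if_true, if_false] <;> ring

theorem satisfiesRecurrence_lehmerSeq :
    SatisfiesRecurrence ![-Q ^ 2, 0, R - 2 * Q, 0] (lehmerSeq R Q) := fun n => by
  simp [Fin.sum_univ_four, lehmerSeq_add_four, neg_add_eq_sub]

-- The Lucas sequence `U n = (a ^ n - b ^ n) / (a - b)` satisfies
-- `U (m + n + 1) = U (m + 1) * U (n + 1) - Q * U m * U n`, and `U n` is `lehmerSeq R Q n` times
-- `√R` for even `n`; the factors `R` collect these square roots.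
theorem lehmerSeq_add_add_one (m n : ℕ) :
    lehmerSeq R Q (m + n + 1) =
      (if Odd m ∧ Odd n then R else 1) * lehmerSeq R Q (m + 1) * lehmerSeq R Q (n + 1) -
        (if Even m ∧ Even n then R else 1) * Q * lehmerSeq R Q m * lehmerSeq R Q n := by
  induction n generalizing m with
  | zero => simp [lehmerSeq]
  | succ n ih =>
    rw [show m + (n + 1) + 1 = m + 1 + n + 1 by ring, ih, lehmerSeq_add_two R Q m,
      lehmerSeq_add_two R Q n]
    by_cases hm : Even m <;> by_cases hn : Even n <;>
      simp only [hm, hn, Nat.even_add_one, ← Nat.not_even_iff_odd, not_true, not_false_eq_true,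
        and_true, and_false, if_true, if_false] <;> ring

theorem lehmerSeq_dvd_lehmerSeq {m n : ℕ} (h : m ∣ n) : lehmerSeq R Q m ∣ lehmerSeq R Q n := by
  obtain ⟨k, rfl⟩ := h
  induction k with
  | zero => simp [lehmerSeq]
  | succ k ih =>
    cases m with
    | zero => simp
    | succ m =>
      rw [mul_add_one, ← add_assoc, lehmerSeq_add_add_one]
      exact dvd_sub (Dvd.intro_left _ rfl) ((ih.mul_left _).mul_right _)

end Lehmer

section Minpoly

open Module

variable {F K : Type*} [Field F] [Field K] [Algebra F K]

theorem norm_eq_coeff_zero_minpoly_of_natDegree_eq_finrank [FiniteDimensional F K] {x : K}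
    (hx : (minpoly F x).natDegree = finrank F K) :
    Algebra.norm F x = (-1) ^ finrank F K * (minpoly F x).coeff 0 := by
  have hint : IsIntegral F x := .of_finite F x
  have hadjoin : Algebra.adjoin F {x} = ⊤ := by
    rw [← IntermediateField.adjoin_simple_toSubalgebra_of_isAlgebraic hint.isAlgebraic,
      (Field.primitive_element_iff_minpoly_natDegree_eq F x).2 hx,
      IntermediateField.top_toSubalgebra]
  have hnorm := Algebra.PowerBasis.norm_gen_eq_coeff_zero_minpoly
    (PowerBasis.ofAdjoinEqTop hint hadjoin)
  rwa [← PowerBasis.finrank, PowerBasis.ofAdjoinEqTop_gen] at hnorm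

theorem natDegree_minpoly_le_finrank_of_mem (L : IntermediateField F K) [FiniteDimensional F L]
    {x : K} (hx : x ∈ L) : (minpoly F x).natDegree ≤ finrank F L := by
  have hmin : minpoly F (⟨x, hx⟩ : L) = minpoly F x := IntermediateField.minpoly_eq _
  exact hmin ▸ minpoly.natDegree_le _

theorem minpoly_eq_expand_minpoly_pow {B : Type*} [Ring B] [Algebra F B] {x : B}
    (hx : IsIntegral F x) {n : ℕ} (hn : 0 < n)
    (h : (minpoly F (x ^ n)).natDegree * n ≤ (minpoly F x).natDegree) :
    minpoly F x = expand F n (minpoly F (x ^ n)) := by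
  have hmonic : (expand F n (minpoly F (x ^ n))).Monic :=
    (monic_expand_iff hn).2 (minpoly.monic (hx.pow n))
  have hdvd : minpoly F x ∣ expand F n (minpoly F (x ^ n)) :=
    minpoly.dvd F x (by rw [expand_aeval, minpoly.aeval])
  exact (eq_of_monic_of_dvd_of_natDegree_le (minpoly.monic hx) hmonic hdvd
    (by rwa [natDegree_expand])).symm

theorem linearIndependent_mul_pow (x : K) {y : K} (hy : y ≠ 0) :
    LinearIndependent F fun i : Fin (minpoly F x).natDegree => y * x ^ (i : ℕ) :=
  (linearIndependent_pow x).map' (LinearMap.mulLeft F y)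
    (LinearMap.ker_eq_bot.2 (mul_right_injective₀ hy))

end Minpoly

theorem sq_eq_of_natDegree_minpoly_eq_two {A B : Type*} [CommRing A] [Ring B] [Algebra A B]
    {x : B} (hx : IsIntegral A x) (hdeg : (minpoly A x).natDegree = 2) :
    x ^ 2 = -(minpoly A x).coeff 1 • x - algebraMap A B ((minpoly A x).coeff 0) := by
  have hlead : (minpoly A x).coeff 2 = 1 := hdeg ▸ (minpoly.monic hx).coeff_natDegree
  have hroot := minpoly.aeval A x
  rw [aeval_eq_sum_range, hdeg] at hroot
  simp only [Finset.sum_range_succ, Finset.range_zero, Finset.sum_empty, hlead, pow_zero, pow_one,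
    one_smul, zero_add, ← Algebra.algebraMap_eq_smul_one] at hroot
  rw [neg_smul, eq_sub_iff_add_eq, eq_neg_iff_add_eq_zero, ← hroot]
  abel

theorem exists_pow_four_eq_mul_sq_sub_norm {K : Type*} [Field K] [NumberField K]
    (hK4 : Module.finrank ℚ K = 4) {L : IntermediateField ℚ K} (hL2 : Module.finrank ℚ L = 2)
    {η : K} (hηdeg : (minpoly ℚ η).natDegree = 4) (hεL : η ^ 2 ∈ L)
    (hεint : IsIntegral ℤ (η ^ 2)) {N : ℤ} (hηnorm : Algebra.norm ℚ η = N) :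
    ∃ t : ℤ, η ^ 4 = t * η ^ 2 - N := by
  have hexpand : minpoly ℚ η = expand ℚ 2 (minpoly ℚ (η ^ 2)) :=
    minpoly_eq_expand_minpoly_pow (.of_finite ℚ η) two_pos (by
      have := natDegree_minpoly_le_finrank_of_mem L hεL
      lia)
  have hmap : minpoly ℚ (η ^ 2) = (minpoly ℤ (η ^ 2)).map (algebraMap ℤ ℚ) :=
    minpoly.isIntegrallyClosed_eq_field_fractions' ℚ hεint
  have hdeg : (minpoly ℤ (η ^ 2)).natDegree = 2 := by
    rw [hexpand, natDegree_expand, hmap, (minpoly.monic hεint).natDegree_map] at hηdeg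
    lia
  have hcoeff : (minpoly ℤ (η ^ 2)).coeff 0 = N := by
    have hnorm := norm_eq_coeff_zero_minpoly_of_natDegree_eq_finrank (hηdeg.trans hK4.symm)
    rw [hηnorm, hK4, Even.neg_one_pow (by decide), one_mul, hexpand, ← zero_mul 2,
      coeff_expand_mul two_pos, hmap, coeff_map, eq_intCast] at hnorm
    exact_mod_cast hnorm.symm
  refine ⟨-(minpoly ℤ (η ^ 2)).coeff 1, ?_⟩
  have hsq := sq_eq_of_natDegree_minpoly_eq_two hεint hdeg
  rw [hcoeff, ← pow_mul] at hsq
  simpa using hsq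

theorem quartic_coordinate_LDS_general {K : Type*} [Field K] [NumberField K]
    (hK4 : Module.finrank ℚ K = 4) {L : IntermediateField ℚ K} (hL2 : Module.finrank ℚ L = 2)
    {η : K} (hηdeg : (minpoly ℚ η).natDegree = 4) {q : ℤ} (hηnorm : Algebra.norm ℚ η = q ^ 2)
    (hεL : η ^ 2 ∈ L) (hεint : IsIntegral ℤ (η ^ 2)) {β : K} (hβ : β ≠ 0) :
    ∃ w : Fin 4 → K,
      Submodule.span ℤ (Set.range w)
        = Submodule.span ℤ (Set.range fun i : Fin 4 => β * η ^ (i : ℕ)) ∧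
      LinearIndependent ℤ w ∧
      ∃ x : Fin 4 → ℕ → ℤ,
        (∀ k : ℕ, β * η ^ k = ∑ i : Fin 4, (x i k : K) * w i) ∧
        (∀ n m : ℕ, n ∣ m → x 0 n ∣ x 0 m) := by
  obtain ⟨t, ht⟩ := exists_pow_four_eq_mul_sq_sub_norm hK4 hL2 hηdeg hεL hεint
    (N := q ^ 2) (by exact_mod_cast hηnorm)
  have hrec : SatisfiesRecurrence ![-q ^ 2, 0, t + 2 * q - 2 * q, 0] fun k => β * η ^ k :=
    satisfiesRecurrence_mul_pow (by simp [Fin.sum_univ_four, ht, neg_add_eq_sub]) β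
  have hli : LinearIndependent ℤ fun i : Fin 4 => β * η ^ (i : ℕ) :=
    (hηdeg ▸ linearIndependent_mul_pow (F := ℚ) η hβ).restrict_scalars' ℤ
  obtain ⟨b, hb⟩ := hrec.exists_basis_coord_eq (satisfiesRecurrence_lehmerSeq (t + 2 * q) q) hli
    (j := 1) rfl 0
  refine ⟨fun i => b i, span_range_coe_basis b,
    b.linearIndependent.map' _ (Submodule.ker_subtype _), fun i k => b.coord i ⟨_, hrec.mem_span k⟩,
    fun k => ?_, fun n m hnm => ?_⟩
  · have hsum := congrArg Subtype.val (b.sum_repr ⟨_, hrec.mem_span k⟩)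
    simpa only [Module.Basis.coord_apply, Submodule.coe_sum, Submodule.coe_smul,
      zsmul_eq_mul] using hsum.symm
  · simpa only [hb] using lehmerSeq_dvd_lehmerSeq _ _ hnm

/-- Theorem 1. Let `K` be a quartic field with a real quadratic
subfield `L`, and `η ∈ K` an algebraic integer of degree 4 and norm 1 with
`ε = η²` a unit of the ring of integers of `L`. For any nonzero `β ∈ K` there
is a ℤ-basis `W` of `M′ = β·ℤ[η]` making the first coordinate sequence of
`β·η^k` a linear divisibility sequence. -/
theorem quartic_coordinate_LDS
    (K : Type*) [Field K] [NumberField K] (hK4 : Module.finrank ℚ K = 4)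
    (L : IntermediateField ℚ K) (hL2 : Module.finrank ℚ L = 2) (φ : L →+* ℝ)
    (η : K) (hηint : IsIntegral ℤ η) (hηdeg : (minpoly ℚ η).natDegree = 4)
    (hηnorm : Algebra.norm ℚ η = 1)
    (hεL : η ^ 2 ∈ L)
    (hεint : IsIntegral ℤ (η ^ 2)) (hεinv : IsIntegral ℤ (η ^ 2)⁻¹)
    (β : K) (hβ : β ≠ 0) :
    ∃ w : Fin 4 → K,
      Submodule.span ℤ (Set.range w)
        = Submodule.span ℤ (Set.range fun i : Fin 4 => β * η ^ (i : ℕ)) ∧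
      LinearIndependent ℤ w ∧
      ∃ x : Fin 4 → ℕ → ℤ,
        (∀ k : ℕ, β * η ^ k = ∑ i : Fin 4, (x i k : K) * w i) ∧
        (∀ n m : ℕ, 0 < n → 0 < m → n ∣ m → x 0 n ∣ x 0 m) := by
  have ⟨w, hspan, hli, x, hx, hdvd⟩ := quartic_coordinate_LDS_general (q := 1) hK4 hL2 hηdeg
    (by simpa using hηnorm) hεL hεint hβ
  exact ⟨w, hspan, hli, x, hx, fun n m _ _ => hdvd n m⟩
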